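/- On (0,∞)×ℝ the identities ∂ₓφ₀(x,v) = (1/36) φ₋₁(x,v) and ∂ₓφ₁(x,v) = (35/36) φ₀(x,v) hold, where ∂ₓ denotes the partial derivative in the first argument. -/

import Mathlib

/-!
`U₁`, `U₂`, `U₃` are Tricomi functions `U(a, 2/3, z)` with `a = 5/6, −1/6, 11/6`, and with
`z = |v|³/(9x)` the claim is a list of contiguity relations between them:
`z U₂' = U₂/6 − U₁/36`, `z U₁' = (1/6 + z) U₁ − U₂`, `z U₃' = (7/6 + z) U₃ − U₁`, from which
`z U₄' = (7/6) U₄ + (35/36) U₂` follows algebraically.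

To prove them, Kummer's transformation (`kummer`, Tonelli on a double integral) brings `U₁` and
`U₃` to the shape of `U₂`: all three are multiples of `K p q z = ∫₀^∞ e^{−t} t^p (z+t)^q dt`.
The relations then follow from `∂_z K p q = q K p (q−1)` (`hasDerivAt_K`), the splitting
`K p q = z K p (q−1) + K (p+1) (q−1)` (`K_split`), and integration by parts (`K_parts`).
On the line `v = 0` only the values at `z = 0` enter: `U₁(0) = 6 U₂(0)` and
`U₃(0) = (6/7) U₁(0)`.
-/

noncomputable section

open MeasureTheory Set Filter
open scoped ENNReal

/-- `U₁(z) = (1/Γ(5/6)) ∫₀^∞ e^{−zξ} ξ^{−1/6} (1+ξ)^{−7/6} dξ`. -/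
def U1 (z : ℝ) : ℝ :=
  (1 / Real.Gamma (5/6)) *
    ∫ ξ in Set.Ioi (0:ℝ), Real.exp (-(z * ξ)) * ξ ^ (-(1:ℝ)/6) * (1 + ξ) ^ (-(7:ℝ)/6)

/-- `U₂(z) = (1/Γ(1/6)) ∫₀^∞ e^{−ξ} ξ^{−5/6} (z+ξ)^{1/6} dξ`. -/
def U2 (z : ℝ) : ℝ :=
  (1 / Real.Gamma (1/6)) *
    ∫ ξ in Set.Ioi (0:ℝ), Real.exp (-ξ) * ξ ^ (-(5:ℝ)/6) * (z + ξ) ^ ((1:ℝ)/6)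

/-- The explicit `1/2`-homogeneous solution `φ₀` of the stationary kinetic Kolmogorov equation
in the half-line with absorbing boundary condition. -/
def phi0 (x v : ℝ) : ℝ :=
  if v < 0 then x ^ ((1:ℝ)/6) * U2 (-(v ^ 3) / (9 * x))
  else (Real.Gamma (7/6) / Real.Gamma (1/6)) * x ^ ((1:ℝ)/6) *
    Real.exp (-(v ^ 3) / (9 * x)) * U1 (v ^ 3 / (9 * x))

/-- The explicit solution `φ₋₁`. -/
def phim1 (x v : ℝ) : ℝ :=
  if v < 0 then x ^ (-(5:ℝ)/6) * U1 (-(v ^ 3) / (9 * x))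
  else (Real.Gamma (1/6) / Real.Gamma (7/6)) * x ^ (-(5:ℝ)/6) *
    Real.exp (-(v ^ 3) / (9 * x)) * U2 (v ^ 3 / (9 * x))

/-- `U₃(z) = (1/Γ(11/6)) ∫₀^∞ e^{−zξ} ξ^{5/6} (1+ξ)^{−13/6} dξ`. -/
def U3 (z : ℝ) : ℝ :=
  (1 / Real.Gamma (11/6)) *
    ∫ ξ in Set.Ioi (0:ℝ), Real.exp (-(z * ξ)) * ξ ^ ((5:ℝ)/6) * (1 + ξ) ^ (-(13:ℝ)/6)

/-- `U₄(z) = (1/36) U₁(z) − (1 − z) U₂(z)`. -/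
def U4 (z : ℝ) : ℝ := (1/36) * U1 z - (1 - z) * U2 z

/-- The explicit `7/2`-homogeneous solution `φ₁`, where `Γ(−5/6) = −(6/5)Γ(1/6)`. -/
def phi1 (x v : ℝ) : ℝ :=
  if v < 0 then -(x ^ ((7:ℝ)/6) * U4 (-(v ^ 3) / (9 * x)))
  else -((Real.Gamma (13/6) / (-(6/5) * Real.Gamma (1/6))) * x ^ ((7:ℝ)/6) *
    Real.exp (-(v ^ 3) / (9 * x)) * U3 (v ^ 3 / (9 * x)))

/-- `K p q z = ∫₀^∞ e^{−t} t^p (z+t)^q dt`, the common form of `Γ(1/6) U₂`, `Γ(7/6) U₁` and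
`Γ(13/6) U₃`. -/
def K (p q z : ℝ) : ℝ := ∫ t in Ioi (0:ℝ), Real.exp (-t) * t ^ p * (z + t) ^ q

lemma integrableOn_exp_rpow {p : ℝ} (hp : -1 < p) :
    IntegrableOn (fun t : ℝ => Real.exp (-t) * t ^ p) (Ioi 0) := by
  have h := Real.GammaIntegral_convergent (s := p + 1) (by linarith)
  simpa using h

lemma measurable_K_integrand (p q z : ℝ) :
    Measurable (fun t : ℝ => Real.exp (-t) * t ^ p * (z + t) ^ q) := by
  fun_prop

lemma norm_K_integrand_le {p q y z t : ℝ} (hq : q ≤ 0) (hy : 0 < y) (hyz : y ≤ z) (ht : 0 < t) :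
    ‖Real.exp (-t) * t ^ p * (z + t) ^ q‖ ≤ Real.exp (-t) * t ^ p * y ^ q := by
  have hz : 0 < z + t := by linarith
  rw [Real.norm_of_nonneg (by positivity)]
  exact mul_le_mul_of_nonneg_left (Real.rpow_le_rpow_of_nonpos hy (by linarith) hq)
    (by positivity)

lemma integrableOn_K_of_nonpos {p q z : ℝ} (hp : -1 < p) (hq : q ≤ 0) (hz : 0 < z) :
    IntegrableOn (fun t : ℝ => Real.exp (-t) * t ^ p * (z + t) ^ q) (Ioi 0) := by
  refine Integrable.mono' ((integrableOn_exp_rpow hp).mul_const (z ^ q))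
    (measurable_K_integrand p q z).aestronglyMeasurable ?_
  filter_upwards [ae_restrict_mem measurableSet_Ioi] with t ht
  exact norm_K_integrand_le hq hz le_rfl ht

lemma K_integrand_split {p q z t : ℝ} (hz : 0 < z) (ht : 0 < t) :
    Real.exp (-t) * t ^ p * (z + t) ^ q =
      z * (Real.exp (-t) * t ^ p * (z + t) ^ (q - 1)) +
        Real.exp (-t) * t ^ (p + 1) * (z + t) ^ (q - 1) := by
  have h : (z + t) ^ q = (z + t) ^ (q - 1) * (z + t) := by
    rw [← Real.rpow_add_one (by positivity)]; ring_nf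
  rw [h, Real.rpow_add_one ht.ne']
  ring

lemma integrableOn_K {p q z : ℝ} (hp : -1 < p) (hq : q ≤ 1) (hz : 0 < z) :
    IntegrableOn (fun t : ℝ => Real.exp (-t) * t ^ p * (z + t) ^ q) (Ioi 0) := by
  refine IntegrableOn.congr_fun (((integrableOn_K_of_nonpos (q := q - 1) hp (by linarith)
    hz).const_mul z).add (integrableOn_K_of_nonpos (p := p + 1) (q := q - 1) (by linarith)
    (by linarith) hz)) (fun t ht => ?_) measurableSet_Ioi
  exact (K_integrand_split hz ht).symm

/-- Writing `(z+t)^q = z (z+t)^(q-1) + t (z+t)^(q-1)` under the integral. -/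
lemma K_split {p q z : ℝ} (hp : -1 < p) (hq : q ≤ 1) (hz : 0 < z) :
    K p q z = z * K p (q - 1) z + K (p + 1) (q - 1) z := by
  unfold K
  rw [← integral_const_mul, ← integral_add]
  · exact setIntegral_congr_fun measurableSet_Ioi fun t ht => K_integrand_split hz ht
  · exact (integrableOn_K hp (by linarith) hz).const_mul z
  · exact integrableOn_K (by linarith) (by linarith) hz

/-- Integration by parts: the integral of `d/dt (e^{−t} t^p (z+t)^q)` vanishes. -/
lemma K_parts {p q z : ℝ} (hp : 0 < p) (hq : q ≤ 0) (hz : 0 < z) :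
    K p q z = p * K (p - 1) q z + q * K p (q - 1) z := by
  have i1 := integrableOn_K (p := p) (q := q) (by linarith) (by linarith) hz
  have i2 := (integrableOn_K (p := p - 1) (q := q) (by linarith) (by linarith) hz).const_mul p
  have i3 := (integrableOn_K (p := p) (q := q - 1) (by linarith) (by linarith) hz).const_mul q
  have key := integral_Ioi_of_hasDerivAt_of_tendsto (a := 0) (m := 0)
    (f := fun t : ℝ => Real.exp (-t) * t ^ p * (z + t) ^ q)
    (f' := fun t : ℝ => (p * (Real.exp (-t) * t ^ (p - 1) * (z + t) ^ q)
      + q * (Real.exp (-t) * t ^ p * (z + t) ^ (q - 1)))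
      - Real.exp (-t) * t ^ p * (z + t) ^ q) ?_ ?_ ((i2.add i3).sub i1) ?_
  · rw [integral_sub (by exact i2.add i3) i1, integral_add i2 i3] at key
    rw [integral_const_mul, integral_const_mul] at key
    simp only [Real.zero_rpow hp.ne', mul_zero, zero_mul, sub_zero] at key
    unfold K
    linarith
  · apply ContinuousAt.continuousWithinAt
    refine ContinuousAt.mul (ContinuousAt.mul (by fun_prop) ?_) ?_
    · exact Real.continuousAt_rpow_const _ _ (Or.inr hp.le)
    · exact ContinuousAt.rpow_const (by fun_prop) (Or.inl (by simpa using hz.ne'))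
  · intro t ht
    have ht : 0 < t := ht
    have h1 : HasDerivAt (fun t : ℝ => Real.exp (-t)) (Real.exp (-t) * (-1)) t :=
      (hasDerivAt_neg t).exp
    have h2 := Real.hasDerivAt_rpow_const (x := t) (p := p) (Or.inl ht.ne')
    have h3 := ((hasDerivAt_id t).const_add z).rpow_const (p := q)
      (Or.inl (by simp only [id]; positivity))
    refine ((h1.mul h2).mul h3).congr_deriv ?_
    simp only [id, Pi.mul_apply]
    ring
  · have h0 := (tendsto_rpow_mul_exp_neg_mul_atTop_nhds_zero p 1 one_pos).mul_const (z ^ q)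
    rw [zero_mul] at h0
    refine squeeze_zero_norm' ?_ h0
    filter_upwards [eventually_gt_atTop 0] with t ht
    refine (norm_K_integrand_le hq hz le_rfl ht).trans (le_of_eq ?_)
    rw [neg_one_mul]
    ring

lemma hasDerivAt_K {p q z : ℝ} (hp : -1 < p) (hq : q ≤ 1) (hz : 0 < z) :
    HasDerivAt (K p q) (q * K p (q - 1) z) z := by
  have h := hasDerivAt_integral_of_dominated_loc_of_deriv_le (μ := volume.restrict (Ioi (0:ℝ)))
    (F := fun z t : ℝ => Real.exp (-t) * t ^ p * (z + t) ^ q)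
    (F' := fun z t : ℝ => q * (Real.exp (-t) * t ^ p * (z + t) ^ (q - 1)))
    (bound := fun t => |q| * (Real.exp (-t) * t ^ p * (z / 2) ^ (q - 1)))
    (x₀ := z) (s := Ioi (z / 2)) (Ioi_mem_nhds (by linarith))
    (Eventually.of_forall fun y => (measurable_K_integrand p q y).aestronglyMeasurable)
    (integrableOn_K hp hq hz)
    ((measurable_K_integrand p (q - 1) z).const_mul q).aestronglyMeasurable ?_
    (((integrableOn_exp_rpow hp).mul_const _).const_mul _) ?_
  · have h2 := h.2
    rw [integral_const_mul] at h2
    exact h2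
  · filter_upwards [ae_restrict_mem measurableSet_Ioi] with t ht y hy
    rw [norm_mul, Real.norm_eq_abs]
    exact mul_le_mul_of_nonneg_left
      (norm_K_integrand_le (by linarith) (by linarith) (le_of_lt hy) ht) (abs_nonneg q)
  · filter_upwards [ae_restrict_mem measurableSet_Ioi] with t ht y hy
    have ht : 0 < t := ht
    have hy : z / 2 < y := hy
    have h3 := ((hasDerivAt_id y).add_const t).rpow_const (p := q)
      (Or.inl (by simp only [id]; linarith))
    refine (h3.const_mul (Real.exp (-t) * t ^ p)).congr_deriv ?_
    simp only [id]
    ring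

lemma lintegral_rpow_mul_exp {a r : ℝ} (ha : 0 < a) (hr : 0 < r) :
    ∫⁻ t in Ioi (0:ℝ), ENNReal.ofReal (t ^ (a - 1) * Real.exp (-(r * t))) =
      ENNReal.ofReal (r ^ (-a) * Real.Gamma a) := by
  have hI := Real.integral_rpow_mul_exp_neg_mul_Ioi ha hr
  have hG := Real.Gamma_pos_of_pos ha
  rw [← ofReal_integral_eq_lintegral_ofReal, hI, one_div, Real.inv_rpow hr.le,
    Real.rpow_neg hr.le]
  · apply Integrable.of_integral_ne_zero
    rw [hI]
    positivity
  · filter_upwards [ae_restrict_mem measurableSet_Ioi] with t ht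
    have ht : 0 < t := ht
    simp only [Pi.zero_apply]
    positivity

/-- Kummer's transformation. Both sides equal
`∫∫ e^{−zξ} ξ^{a−1} t^{c−1} e^{−t(1+ξ)} dt dξ` over the quadrant, by Tonelli's theorem; no
convergence hypothesis is needed, since in the divergent case both Bochner integrals are `0`. -/
lemma kummer {a c z : ℝ} (ha : 0 < a) (hc : 0 < c) (hz : 0 ≤ z) :
    Real.Gamma c * ∫ ξ in Ioi (0:ℝ), Real.exp (-(z * ξ)) * ξ ^ (a - 1) * (1 + ξ) ^ (-c) =
      Real.Gamma a * K (c - 1) (-a) z := by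
  have hGc := Real.Gamma_pos_of_pos hc
  have hGa := Real.Gamma_pos_of_pos ha
  unfold K
  rw [← integral_const_mul, ← integral_const_mul, integral_eq_lintegral_of_nonneg_ae,
    integral_eq_lintegral_of_nonneg_ae]
  · congr 1
    calc
      _ = ∫⁻ ξ in Ioi (0:ℝ), ∫⁻ t in Ioi (0:ℝ),
            ENNReal.ofReal (Real.exp (-(z * ξ)) * ξ ^ (a - 1) *
              (t ^ (c - 1) * Real.exp (-((1 + ξ) * t)))) := by
        refine setLIntegral_congr_fun measurableSet_Ioi fun ξ hξ => ?_
        have hξ : 0 < ξ := hξ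
        simp only [ENNReal.ofReal_mul (show 0 ≤ Real.exp (-(z * ξ)) * ξ ^ (a - 1) by positivity)]
        rw [lintegral_const_mul' _ _ ENNReal.ofReal_ne_top,
          lintegral_rpow_mul_exp hc (by positivity), ← ENNReal.ofReal_mul (by positivity)]
        congr 1
        ring
      _ = ∫⁻ t in Ioi (0:ℝ), ∫⁻ ξ in Ioi (0:ℝ),
            ENNReal.ofReal (Real.exp (-(z * ξ)) * ξ ^ (a - 1) *
              (t ^ (c - 1) * Real.exp (-((1 + ξ) * t)))) := by
        refine lintegral_lintegral_swap (Measurable.aemeasurable ?_)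
        unfold Function.uncurry
        fun_prop
      _ = _ := by
        refine setLIntegral_congr_fun measurableSet_Ioi fun t ht => ?_
        have ht : 0 < t := ht
        have hexp : ∀ ξ : ℝ, Real.exp (-(z * ξ)) * ξ ^ (a - 1) *
              (t ^ (c - 1) * Real.exp (-((1 + ξ) * t))) =
            (Real.exp (-t) * t ^ (c - 1)) * (ξ ^ (a - 1) * Real.exp (-((z + t) * ξ))) := by
          intro ξ
          have h : Real.exp (-(z * ξ)) * Real.exp (-((1 + ξ) * t)) =
              Real.exp (-t) * Real.exp (-((z + t) * ξ)) := by
            rw [← Real.exp_add, ← Real.exp_add]; ring_nf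
          linear_combination (ξ ^ (a - 1) * t ^ (c - 1)) * h
        simp only [hexp, ENNReal.ofReal_mul (show 0 ≤ Real.exp (-t) * t ^ (c - 1) by positivity)]
        rw [lintegral_const_mul' _ _ ENNReal.ofReal_ne_top,
          lintegral_rpow_mul_exp ha (by positivity), ← ENNReal.ofReal_mul (by positivity)]
        congr 1
        ring
  · filter_upwards [ae_restrict_mem measurableSet_Ioi] with t ht
    have ht : 0 < t := ht
    simp only [Pi.zero_apply]
    positivity
  · exact Measurable.aestronglyMeasurable (by fun_prop)
  · filter_upwards [ae_restrict_mem measurableSet_Ioi] with t ht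
    have ht : 0 < t := ht
    simp only [Pi.zero_apply]
    positivity
  · exact Measurable.aestronglyMeasurable (by fun_prop)

lemma Gamma_seven_sixths : Real.Gamma (7/6) = 1/6 * Real.Gamma (1/6) := by
  rw [← Real.Gamma_add_one (by norm_num)]; norm_num

lemma Gamma_thirteen_sixths : Real.Gamma (13/6) = 7/36 * Real.Gamma (1/6) := by
  have h := Real.Gamma_add_one (s := 7/6) (by norm_num)
  rw [Gamma_seven_sixths] at h
  norm_num at h ⊢
  linarith

lemma U1_eq {z : ℝ} (hz : 0 ≤ z) : U1 z = 6 / Real.Gamma (1/6) * K (1/6) (-5/6) z := by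
  have h := kummer (a := 5/6) (c := 7/6) (by norm_num) (by norm_num) hz
  have h1 := Real.Gamma_pos_of_pos (show (0:ℝ) < 1/6 by norm_num)
  have h5 := Real.Gamma_pos_of_pos (show (0:ℝ) < 5/6 by norm_num)
  rw [Gamma_seven_sixths] at h
  norm_num at h
  unfold U1
  norm_num
  field_simp
  field_simp at h
  linarith

lemma U2_eq (z : ℝ) : U2 z = 1 / Real.Gamma (1/6) * K (-5/6) (1/6) z := rfl

lemma U3_eq {z : ℝ} (hz : 0 ≤ z) :
    U3 z = 36 / (7 * Real.Gamma (1/6)) * K (7/6) (-11/6) z := by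
  have h := kummer (a := 11/6) (c := 13/6) (by norm_num) (by norm_num) hz
  have h1 := Real.Gamma_pos_of_pos (show (0:ℝ) < 1/6 by norm_num)
  have h5 := Real.Gamma_pos_of_pos (show (0:ℝ) < 11/6 by norm_num)
  rw [Gamma_thirteen_sixths] at h
  norm_num at h
  unfold U3
  norm_num
  field_simp
  field_simp at h
  linarith

lemma U2_deriv {z : ℝ} (hz : 0 < z) :
    ∃ d, HasDerivAt U2 d z ∧ z * d = 1/6 * U2 z - 1/36 * U1 z := by
  refine ⟨_, (hasDerivAt_K (p := -5/6) (q := 1/6) (by norm_num) (by norm_num) hz).const_mul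
    (1 / Real.Gamma (1/6)), ?_⟩
  have hs := K_split (p := -5/6) (q := 1/6) (by norm_num) (by norm_num) hz
  rw [U2_eq, U1_eq hz.le]
  norm_num at hs ⊢
  rw [hs]
  ring

lemma U1_deriv {z : ℝ} (hz : 0 < z) :
    ∃ d, HasDerivAt U1 d z ∧ z * d = (1/6 + z) * U1 z - U2 z := by
  refine ⟨_, ((hasDerivAt_K (p := 1/6) (q := -5/6) (by norm_num) (by norm_num) hz).const_mul
    (6 / Real.Gamma (1/6))).congr_of_eventuallyEq ?_, ?_⟩
  · filter_upwards [Ioi_mem_nhds hz] with y hy using U1_eq (le_of_lt hy)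
  have hs := K_split (p := -5/6) (q := 1/6) (by norm_num) (by norm_num) hz
  have hp := K_parts (p := 1/6) (q := -5/6) (by norm_num) (by norm_num) hz
  rw [U2_eq, U1_eq hz.le]
  norm_num at hs hp ⊢
  rw [hs]
  linear_combination (6 * z / Real.Gamma (1/6)) * (-hp)

lemma U3_deriv {z : ℝ} (hz : 0 < z) :
    ∃ d, HasDerivAt U3 d z ∧ z * d = (7/6 + z) * U3 z - U1 z := by
  refine ⟨_, ((hasDerivAt_K (p := 7/6) (q := -11/6) (by norm_num) (by norm_num) hz).const_mul
    (36 / (7 * Real.Gamma (1/6)))).congr_of_eventuallyEq ?_, ?_⟩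
  · filter_upwards [Ioi_mem_nhds hz] with y hy using U3_eq (le_of_lt hy)
  have hs := K_split (p := 1/6) (q := -5/6) (by norm_num) (by norm_num) hz
  have hp := K_parts (p := 7/6) (q := -11/6) (by norm_num) (by norm_num) hz
  rw [U3_eq hz.le, U1_eq hz.le]
  norm_num at hs hp ⊢
  rw [hs]
  have h1 := (Real.Gamma_pos_of_pos (show (0:ℝ) < 1/6 by norm_num)).ne'
  norm_num at h1
  field_simp
  linear_combination (-216 * z) * hp

lemma U4_deriv {z : ℝ} (hz : 0 < z) :
    ∃ d, HasDerivAt U4 d z ∧ z * d = 7/6 * U4 z + 35/36 * U2 z := by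
  obtain ⟨d1, h1, e1⟩ := U1_deriv hz
  obtain ⟨d2, h2, e2⟩ := U2_deriv hz
  refine ⟨_, (h1.const_mul (1/36)).sub (((hasDerivAt_id z).const_sub 1).mul h2), ?_⟩
  simp only [U4, id]
  linear_combination (1/36) * e1 - (1 - z) * e2

/-- At `z = 0` the integrand of `K p q` is `e^{−t} t^(p+q)`. -/
lemma K_zero {p q p' q' : ℝ} (h : p + q = p' + q') : K p q 0 = K p' q' 0 := by
  refine setIntegral_congr_fun measurableSet_Ioi fun t ht => ?_
  have ht : 0 < t := ht
  simp only [zero_add, mul_assoc, ← Real.rpow_add ht, h]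

lemma U1_zero : U1 0 = 6 * U2 0 := by
  rw [U1_eq le_rfl, U2_eq, K_zero (p' := -5/6) (q' := 1/6) (by norm_num)]
  ring

lemma U3_zero : U3 0 = 6/7 * U1 0 := by
  have h1 := (Real.Gamma_pos_of_pos (show (0:ℝ) < 1/6 by norm_num)).ne'
  rw [U1_eq le_rfl, U3_eq le_rfl, K_zero (p' := 1/6) (q' := -5/6) (by norm_num)]
  field_simp
  norm_num

/-- Chain rule for `s ↦ s^r G(w/(9s))`. -/
lemma hasDerivAt_selfSimilar {G : ℝ → ℝ} {d w x : ℝ} (r : ℝ) (hx : 0 < x)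
    (hG : HasDerivAt G d (w / (9 * x))) :
    HasDerivAt (fun s => s ^ r * G (w / (9 * s)))
      (x ^ (r - 1) * (r * G (w / (9 * x)) - w / (9 * x) * d)) x := by
  have h1 := Real.hasDerivAt_rpow_const (x := x) (p := r) (Or.inl hx.ne')
  have h2 : HasDerivAt (fun s : ℝ => w / (9 * s)) (-(w / (9 * x)) / x) x := by
    have h := (hasDerivAt_inv hx.ne').const_mul (w / 9)
    refine (h.congr_of_eventuallyEq (Eventually.of_forall fun s => ?_)).congr_deriv ?_
    · simp only [div_eq_mul_inv, mul_inv]; ring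
    · field_simp
  have h3 : HasDerivAt (fun s => G (w / (9 * s))) (d * (-(w / (9 * x)) / x)) x :=
    HasDerivAt.comp x hG h2
  refine (h1.mul h3).congr_deriv ?_
  rw [Real.rpow_sub_one hx.ne']
  field_simp
  ring

/-- The branch `v ≥ 0`: if `z G' = (r + z) G − H` for `z > 0` and `r G(0) = H(0)`, then
`x^r e^{−z} G(z)` with `z = w/(9x)` has `x`-derivative `x^{r−1} e^{−z} H(z)`. The case `w = 0` is
separate because `G` need not be differentiable at `0`. -/
lemma hasDerivAt_branch {G H : ℝ → ℝ} {r w x : ℝ} (hx : 0 < x) (hw : 0 ≤ w)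
    (hG : ∀ z, 0 < z → ∃ d, HasDerivAt G d z ∧ z * d = (r + z) * G z - H z)
    (h0 : r * G 0 = H 0) :
    HasDerivAt (fun s => s ^ r * (Real.exp (-(w / (9 * s))) * G (w / (9 * s))))
      (x ^ (r - 1) * (Real.exp (-(w / (9 * x))) * H (w / (9 * x)))) x := by
  rcases hw.eq_or_lt with rfl | hw
  · have h1 := Real.hasDerivAt_rpow_const (x := x) (p := r) (Or.inl hx.ne')
    simp only [zero_div, neg_zero, Real.exp_zero, one_mul]
    refine (h1.mul_const (G 0)).congr_deriv ?_
    rw [← h0]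
    ring
  · have hz : 0 < w / (9 * x) := by positivity
    obtain ⟨d, hd, e⟩ := hG _ hz
    have hE : HasDerivAt (fun z : ℝ => Real.exp (-z))
        (Real.exp (-(w / (9 * x))) * (-1)) (w / (9 * x)) := (hasDerivAt_neg _).exp
    refine (hasDerivAt_selfSimilar r hx (hE.mul hd)).congr_deriv ?_
    simp only [Pi.mul_apply]
    linear_combination (-(x ^ (r - 1) * Real.exp (-(w / (9 * x))))) * e

theorem statement_18 (x v : ℝ) (hx : 0 < x) :
    HasDerivAt (fun s => phi0 s v) ((1/36) * phim1 x v) x ∧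
    HasDerivAt (fun s => phi1 s v) ((35/36) * phi0 x v) x := by
  have hΓ := (Real.Gamma_pos_of_pos (show (0:ℝ) < 1/6 by norm_num)).ne'
  by_cases hv : v < 0
  · have hw : 0 < -(v ^ 3) := by
      have := Odd.pow_neg (n := 3) (by decide) hv
      linarith
    have hz : 0 < -(v ^ 3) / (9 * x) := by positivity
    simp only [phi0, phim1, phi1, if_pos hv]
    constructor
    · obtain ⟨d, hd, e⟩ := U2_deriv hz
      refine (hasDerivAt_selfSimilar (1/6) hx hd).congr_deriv ?_
      rw [e, show (1:ℝ)/6 - 1 = -5/6 by norm_num]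
      ring
    · obtain ⟨d, hd, e⟩ := U4_deriv hz
      refine (hasDerivAt_selfSimilar (7/6) hx hd).neg.congr_deriv ?_
      rw [e, show (7:ℝ)/6 - 1 = 1/6 by norm_num]
      ring
  · have hw : 0 ≤ v ^ 3 := pow_nonneg (not_lt.mp hv) 3
    simp only [phi0, phim1, phi1, if_neg hv, neg_div, Gamma_seven_sixths, Gamma_thirteen_sixths]
    constructor
    · have h := hasDerivAt_branch (r := 1/6) hx hw (fun z => U1_deriv)
        (by rw [U1_zero]; ring)
      refine ((h.const_mul (1/6)).congr_of_eventuallyEq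
        (Eventually.of_forall fun s => ?_)).congr_deriv ?_
      · field_simp
      · rw [show (1:ℝ)/6 - 1 = -(5/6) by norm_num]
        field_simp
        ring
    · have h := hasDerivAt_branch (r := 7/6) hx hw (fun z => U3_deriv)
        (by rw [U3_zero]; ring)
      refine ((h.const_mul (35/216)).congr_of_eventuallyEq
        (Eventually.of_forall fun s => ?_)).congr_deriv ?_
      · field_simp
        ring
      · rw [show (7:ℝ)/6 - 1 = 1/6 by norm_num]
        field_simp
        ring
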